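/- Let M ≥ 3 be an integer and let (u_0, u_1, …, u_M) solve the optimality system. Then for every c ∈ 𝒮, u_1 ≥ [ c^{−1}·γ_max^{−(M−3)}·(1 − h_M(c)) − h_M(γ_max)·S_{M−2}(γ_max) ] / [ S_{M−2}(γ_max) + γ_max + c^{−1}·γ_max^{−(M−3)} ]. -/

import Mathlib

noncomputable def gammaMin (d : ℕ) (β : ℝ) : ℝ := β / (2 * β + d)

noncomputable def gammaMax (d : ℕ) (β : ℝ) : ℝ := (β + d) / (2 * β + d)

noncomputable def Sset (d : ℕ) (β : ℝ) : Set ℝ := Set.Icc (gammaMin d β) (gammaMax d β)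

noncomputable def hFun (M : ℕ) (γ : ℝ) : ℝ := (1 - γ) / (1 - γ ^ M)

/-- φ_M(x) = min_{γ∈𝒮} (γ·x + h_M(γ)). -/
noncomputable def phiFun (d : ℕ) (β : ℝ) (M : ℕ) (x : ℝ) : ℝ :=
  sInf ((fun γ => γ * x + hFun M γ) '' Sset d β)

/-- (u_0, …, u_M) solves the optimality system: u_0 = 0, u_M = 1,
0 < u_1 < ⋯ < u_{M−1} < 1, and u_i = u_1 + φ_M(u_{i−1}) for 2 ≤ i ≤ M. -/
def SolvesOptSystem (d : ℕ) (β : ℝ) (M : ℕ) (u : ℕ → ℝ) : Prop :=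
  u 0 = 0 ∧ u M = 1 ∧ 0 < u 1 ∧ u (M - 1) < 1 ∧
  (∀ i, 1 ≤ i → i + 1 ≤ M - 1 → u i < u (i + 1)) ∧
  ∀ i, 2 ≤ i → i ≤ M → u i = u 1 + phiFun d β M (u (i - 1))

/-- S_n(a) = Σ_{k=0}^{n−1} a^{−k}. -/
noncomputable def Sgeo (n : ℕ) (a : ℝ) : ℝ := ∑ k ∈ Finset.range n, a⁻¹ ^ k

/-!
Keeping a single `γ ∈ 𝒮` in the minimum gives the affine bound `u i ≤ u 1 + γ * u (i - 1) + h_M γ`.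
Iterating it from `u 1` to `u (M - 1)` with one fixed `g ∈ 𝒮`, and closing the last step from
`u (M - 1)` to `u M` with another `c ∈ 𝒮`, bounds `u M` by an increasing affine function of `u 1`.
Solving for `u 1` gives a lower bound for every pair `c, g ∈ 𝒮`, and `g = γ_max` is the stated one.
-/

lemma Sgeo_succ (n : ℕ) (a : ℝ) : Sgeo (n + 1) a = Sgeo n a + a⁻¹ ^ n :=
  Finset.sum_range_succ _ n

lemma Sgeo_nonneg {a : ℝ} (ha : 0 ≤ a) (n : ℕ) : 0 ≤ Sgeo n a :=
  Finset.sum_nonneg fun k _ => pow_nonneg (inv_nonneg.mpr ha) k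

lemma inv_pow_mul_le_of_le_mul_add {a b : ℝ} (ha : 0 < a) {v : ℕ → ℝ} {n : ℕ}
    (hv : ∀ i < n, v (i + 1) ≤ a * v i + b) :
    a⁻¹ ^ n * v n ≤ v 0 + a⁻¹ * b * Sgeo n a := by
  induction n with
  | zero => simp [Sgeo]
  | succ n ih =>
    calc a⁻¹ ^ (n + 1) * v (n + 1)
        ≤ a⁻¹ ^ (n + 1) * (a * v n + b) := by gcongr; exact hv n n.lt_succ_self
      _ = a⁻¹ ^ n * v n + a⁻¹ * b * a⁻¹ ^ n := by rw [pow_succ]; field_simp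
      _ ≤ v 0 + a⁻¹ * b * Sgeo n a + a⁻¹ * b * a⁻¹ ^ n := by
        gcongr; exact ih fun i hi => hv i (hi.trans n.lt_succ_self)
      _ = v 0 + a⁻¹ * b * Sgeo (n + 1) a := by rw [Sgeo_succ]; ring

lemma hFun_nonneg {γ : ℝ} (h₀ : 0 ≤ γ) (h₁ : γ ≤ 1) (M : ℕ) : 0 ≤ hFun M γ :=
  div_nonneg (sub_nonneg.mpr h₁) (sub_nonneg.mpr (pow_le_one₀ h₀ h₁))

section OptimalitySystem

variable {d : ℕ} {β : ℝ}

lemma gammaMin_le_gammaMax (hβ : 0 < β) : gammaMin d β ≤ gammaMax d β := by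
  unfold gammaMin gammaMax
  gcongr
  exact le_add_of_nonneg_right d.cast_nonneg

lemma gammaMax_mem_Sset (hβ : 0 < β) : gammaMax d β ∈ Sset d β :=
  Set.right_mem_Icc.mpr (gammaMin_le_gammaMax hβ)

lemma Sset_subset_Ioo (hβ : 0 < β) : Sset d β ⊆ Set.Ioo 0 1 := by
  have denom_pos : 0 < 2 * β + d := by positivity
  have gammaMin_pos : 0 < gammaMin d β := div_pos hβ denom_pos
  have gammaMax_lt_one : gammaMax d β < 1 := by
    rw [gammaMax, div_lt_one denom_pos]
    gcongr
    linarith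
  exact Set.Icc_subset_Ioo gammaMin_pos gammaMax_lt_one

lemma bddBelow_phiFun_image (hβ : 0 < β) (M : ℕ) (x : ℝ) :
    BddBelow ((fun γ => γ * x + hFun M γ) '' Sset d β) := by
  refine ⟨-|x|, ?_⟩
  rintro _ ⟨γ, hγ, rfl⟩
  obtain ⟨hγ₀, hγ₁⟩ := Sset_subset_Ioo hβ hγ
  have abs_mul_le : |γ * x| ≤ |x| := by
    rw [abs_mul, abs_of_pos hγ₀]
    exact mul_le_of_le_one_left (abs_nonneg x) hγ₁.le
  calc -|x| ≤ γ * x := neg_le_of_abs_le abs_mul_le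
    _ ≤ γ * x + hFun M γ := le_add_of_nonneg_right (hFun_nonneg hγ₀.le hγ₁.le M)

lemma phiFun_le (hβ : 0 < β) {γ : ℝ} (hγ : γ ∈ Sset d β) (M : ℕ) (x : ℝ) :
    phiFun d β M x ≤ γ * x + hFun M γ :=
  csInf_le (bddBelow_phiFun_image hβ M x) ⟨γ, hγ, rfl⟩

end OptimalitySystem

lemma div_le_of_le_affine_iterate {c g h k x : ℝ} (hc : 0 < c) (hg : 0 < g) {n : ℕ} {v : ℕ → ℝ}
    (hstep : ∀ i < n + 1, v (i + 1) ≤ g * v i + (v 0 + h))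
    (hlast : x ≤ c * v (n + 1) + (v 0 + k)) :
    (c⁻¹ * g⁻¹ ^ n * (x - k) - h * Sgeo (n + 1) g) /
      (Sgeo (n + 1) g + g + c⁻¹ * g⁻¹ ^ n) ≤ v 0 := by
  have iterate_le : g⁻¹ ^ n * v (n + 1) ≤ g * v 0 + (v 0 + h) * Sgeo (n + 1) g :=
    calc g⁻¹ ^ n * v (n + 1)
        = g * (g⁻¹ ^ (n + 1) * v (n + 1)) := by rw [pow_succ]; field_simp
      _ ≤ g * (v 0 + g⁻¹ * (v 0 + h) * Sgeo (n + 1) g) := by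
        gcongr; exact inv_pow_mul_le_of_le_mul_add hg hstep
      _ = g * v 0 + (v 0 + h) * Sgeo (n + 1) g := by field_simp
  have le_last : c⁻¹ * (x - (v 0 + k)) ≤ v (n + 1) :=
    (inv_mul_le_iff₀ hc).mpr (sub_le_iff_le_add.mpr hlast)
  have hS : 0 ≤ Sgeo (n + 1) g := Sgeo_nonneg hg.le _
  have eliminate_last : c⁻¹ * g⁻¹ ^ n * (x - (v 0 + k)) ≤
      g * v 0 + (v 0 + h) * Sgeo (n + 1) g :=
    calc c⁻¹ * g⁻¹ ^ n * (x - (v 0 + k)) = g⁻¹ ^ n * (c⁻¹ * (x - (v 0 + k))) := by ring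
      _ ≤ g⁻¹ ^ n * v (n + 1) := by gcongr
      _ ≤ g * v 0 + (v 0 + h) * Sgeo (n + 1) g := iterate_le
  rw [div_le_iff₀ (by positivity)]
  linarith

theorem stmt7_general {d : ℕ} {β : ℝ} (hβ : 0 < β) {M : ℕ} (hM : 3 ≤ M)
    {u : ℕ → ℝ} (hu : ∀ i, 2 ≤ i → i ≤ M → u i ≤ u 1 + phiFun d β M (u (i - 1)))
    {c g : ℝ} (hc : c ∈ Sset d β) (hg : g ∈ Sset d β) :
    (c⁻¹ * g⁻¹ ^ (M - 3) * (u M - hFun M c) - hFun M g * Sgeo (M - 2) g) /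
      (Sgeo (M - 2) g + g + c⁻¹ * g⁻¹ ^ (M - 3)) ≤ u 1 := by
  have step_le {γ : ℝ} (hγ : γ ∈ Sset d β) (i : ℕ) (hi : i + 2 ≤ M) :
      u (i + 2) ≤ γ * u (i + 1) + (u 1 + hFun M γ) :=
    calc u (i + 2) ≤ u 1 + phiFun d β M (u (i + 1)) := hu (i + 2) le_add_self hi
      _ ≤ u 1 + (γ * u (i + 1) + hFun M γ) := by gcongr; exact phiFun_le hβ hγ M _
      _ = γ * u (i + 1) + (u 1 + hFun M γ) := by ring
  obtain ⟨n, rfl⟩ := Nat.exists_eq_add_of_le' hM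
  exact div_le_of_le_affine_iterate (v := fun i => u (i + 1))
    (Sset_subset_Ioo hβ hc).1 (Sset_subset_Ioo hβ hg).1
    (fun i hi => step_le hg i (by lia)) (step_le hc (n + 1) le_rfl)

theorem stmt7 (d : ℕ) (hd : 1 ≤ d) (β : ℝ) (hβ : 0 < β) (M : ℕ) (hM3 : 3 ≤ M)
    (u : ℕ → ℝ) (hsol : SolvesOptSystem d β M u)
    (c : ℝ) (hc : c ∈ Sset d β) :
    (c⁻¹ * (gammaMax d β)⁻¹ ^ (M - 3) * (1 - hFun M c)
        - hFun M (gammaMax d β) * Sgeo (M - 2) (gammaMax d β)) /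
      (Sgeo (M - 2) (gammaMax d β) + gammaMax d β + c⁻¹ * (gammaMax d β)⁻¹ ^ (M - 3))
    ≤ u 1 := by
  obtain ⟨-, hM, -, -, -, hrec⟩ := hsol
  simpa only [hM] using
    stmt7_general hβ hM3 (fun i hi hiM => (hrec i hi hiM).le) hc (gammaMax_mem_Sset hβ)
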